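/- Let χ₁, χ₂ : ℝ^{1+d} → ℂ be smooth bounded functions (with all derivatives bounded) such that the distance between the supports of χ₁ and χ₂, measured in the t-variable, is at least d > 0. Then there exist C, c > 0 such that for all Schwartz functions u and all λ > 0, ‖χ₁ e^{-|D_t|²/λ}(χ₂ u)‖_{L²} ≤ C e^{-cλ} ‖u‖_{L²}, where e^{-|D_t|²/λ} is the Fourier multiplier in t with symbol e^{-|ξ_t|²/λ}. -/

import Mathlib

open MeasureTheory

/-!
For `l > 0` the heat kernel of `e^{-|D_t|²/l}` is the density of a centred Gaussian law `γ` of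
variance `2 / l`, so the operator averages `v` over translates: `v ↦ ∫ v (t + r, x) ∂γ(r)`.
Between the two cutoffs only the translations with `|r| ≥ d` contribute. An average of `Lᵖ`
functions over measure-preserving maps is bounded by the total mass of the averaging measure, which
here is the tail `γ {|r| ≥ d}`, and Chernoff's bound gives `γ {|r| ≥ d} ≤ 2 exp (-d² l / 4)`.
-/

open ProbabilityTheory
open scoped ENNReal NNReal

section Averages

variable {X Ω Ω' : Type*} [MeasurableSpace X] [MeasurableSpace Ω] [MeasurableSpace Ω']
  {μ : Measure X} {ν : Measure Ω} {ν' : Measure Ω'}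

theorem rpow_lintegral_le_measure_univ_rpow_mul_lintegral_rpow {q : ℝ} (hq : 1 ≤ q)
    {f : X → ℝ≥0∞} (hf : AEMeasurable f μ) :
    (∫⁻ x, f x ∂μ) ^ q ≤ μ Set.univ ^ (q - 1) * ∫⁻ x, f x ^ q ∂μ := by
  have hq₀ : 0 < q := one_pos.trans_le hq
  have h := eLpNorm'_le_eLpNorm'_mul_rpow_measure_univ one_pos hq hf.aestronglyMeasurable
  simp only [eLpNorm'_eq_lintegral_enorm, enorm_eq_self, ENNReal.rpow_one, div_one] at h
  calc (∫⁻ x, f x ∂μ) ^ q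
      ≤ ((∫⁻ x, f x ^ q ∂μ) ^ (1 / q) * μ Set.univ ^ (1 - 1 / q)) ^ q := by gcongr
    _ = μ Set.univ ^ (q - 1) * ∫⁻ x, f x ^ q ∂μ := by
        rw [ENNReal.mul_rpow_of_nonneg _ _ hq₀.le, ← ENNReal.rpow_mul, ← ENNReal.rpow_mul,
          one_div_mul_cancel hq₀.ne', ENNReal.rpow_one, sub_mul, one_mul,
          one_div_mul_cancel hq₀.ne', mul_comm]

variable [SFinite μ] [SFinite ν] {T : X → Ω → Ω'}

theorem quasiMeasurePreserving_uncurry_swap (hT : Measurable (Function.uncurry T))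
    (hT_mp : ∀ x, MeasurePreserving (T x) ν ν') :
    Measure.QuasiMeasurePreserving (fun z : Ω × X => T z.2 z.1) (ν.prod μ) ν' :=
  QuasiMeasurePreserving.prod_of_left (hT.comp measurable_swap)
    (ae_of_all _ fun x => (hT_mp x).quasiMeasurePreserving)

theorem lintegral_rpow_lintegral_comp_le {q : ℝ} (hq : 1 ≤ q) (hT : Measurable (Function.uncurry T))
    (hT_mp : ∀ x, MeasurePreserving (T x) ν ν') {f : Ω' → ℝ≥0∞} (hf : AEMeasurable f ν') :
    ∫⁻ ω, (∫⁻ x, f (T x ω) ∂μ) ^ q ∂ν ≤ μ Set.univ ^ q * ∫⁻ ω, f ω ^ q ∂ν' := by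
  have hfT : AEMeasurable (fun z : Ω × X => f (T z.2 z.1)) (ν.prod μ) :=
    hf.comp_quasiMeasurePreserving (quasiMeasurePreserving_uncurry_swap hT hT_mp)
  have hfTq : AEMeasurable (fun z : Ω × X => f (T z.2 z.1) ^ q) (ν.prod μ) := hfT.pow_const q
  calc ∫⁻ ω, (∫⁻ x, f (T x ω) ∂μ) ^ q ∂ν
      ≤ ∫⁻ ω, μ Set.univ ^ (q - 1) * ∫⁻ x, f (T x ω) ^ q ∂μ ∂ν := by
        refine lintegral_mono_ae ?_
        filter_upwards [hfT.aestronglyMeasurable.prodMk_left] with ω hω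
        exact rpow_lintegral_le_measure_univ_rpow_mul_lintegral_rpow hq hω.aemeasurable
    _ = μ Set.univ ^ (q - 1) * ∫⁻ x, ∫⁻ ω, f (T x ω) ^ q ∂ν ∂μ := by
        rw [lintegral_const_mul'' _ hfTq.lintegral_prod_right', lintegral_lintegral_swap hfTq]
    _ = μ Set.univ ^ (q - 1) * ∫⁻ _, ∫⁻ ω, f ω ^ q ∂ν' ∂μ := by
        congr 1
        refine lintegral_congr fun x => ?_
        rw [← (hT_mp x).map_eq, lintegral_map' ((hT_mp x).map_eq ▸ hf.pow_const q)
          (hT_mp x).aemeasurable]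
    _ = μ Set.univ ^ q * ∫⁻ ω, f ω ^ q ∂ν' := by
        rw [lintegral_const, mul_comm (∫⁻ _, _ ∂_), ← mul_assoc]
        congr 1
        nth_rw 2 [← ENNReal.rpow_one (μ Set.univ)]
        rw [← ENNReal.rpow_add_of_nonneg _ _ (by linarith) zero_le_one, sub_add_cancel]

theorem eLpNorm_lintegral_comp_le {q : ℝ≥0∞} (hq : 1 ≤ q) (hT : Measurable (Function.uncurry T))
    (hT_mp : ∀ x, MeasurePreserving (T x) ν ν') {f : Ω' → ℝ≥0∞} (hf : AEMeasurable f ν') :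
    eLpNorm (fun ω => ∫⁻ x, f (T x ω) ∂μ) q ν ≤ μ Set.univ * eLpNorm f q ν' := by
  have hq₀ : q ≠ 0 := (one_pos.trans_le hq).ne'
  rcases eq_or_ne q ∞ with rfl | hq_top
  · simp only [eLpNorm_exponent_top]
    refine eLpNormEssSup_le_of_ae_enorm_bound ?_
    have hle : ∀ᵐ z ∂ν.prod μ, f (T z.2 z.1) ≤ eLpNormEssSup f ν' :=
      (quasiMeasurePreserving_uncurry_swap hT hT_mp).ae (enorm_ae_le_eLpNormEssSup f ν')
    filter_upwards [Measure.ae_ae_of_ae_prod hle] with ω hω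
    calc ∫⁻ x, f (T x ω) ∂μ
        ≤ ∫⁻ _, eLpNormEssSup f ν' ∂μ := lintegral_mono_ae hω
      _ = μ Set.univ * eLpNormEssSup f ν' := by rw [lintegral_const, mul_comm]
  · have hq_one : 1 ≤ q.toReal := ENNReal.toReal_mono hq_top hq
    have hq_pos : 0 < q.toReal := one_pos.trans_le hq_one
    simp only [eLpNorm_eq_lintegral_rpow_enorm_toReal hq₀ hq_top, enorm_eq_self]
    calc (∫⁻ ω, (∫⁻ x, f (T x ω) ∂μ) ^ q.toReal ∂ν) ^ (1 / q.toReal)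
        ≤ (μ Set.univ ^ q.toReal * ∫⁻ ω, f ω ^ q.toReal ∂ν') ^ (1 / q.toReal) := by
          gcongr
          exact lintegral_rpow_lintegral_comp_le hq_one hT hT_mp hf
      _ = μ Set.univ * (∫⁻ ω, f ω ^ q.toReal ∂ν') ^ (1 / q.toReal) := by
          rw [ENNReal.mul_rpow_of_nonneg _ _ (by positivity), ← ENNReal.rpow_mul,
            mul_one_div_cancel hq_pos.ne', ENNReal.rpow_one]

end Averages

theorem measure_le_abs_le_of_hasSubgaussianMGF {Ω : Type*} [MeasurableSpace Ω] {μ : Measure Ω}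
    {X : Ω → ℝ} {c : ℝ≥0} (hX : HasSubgaussianMGF X c μ) {d : ℝ} (hd : 0 ≤ d) :
    μ {ω | d ≤ |X ω|} ≤ ENNReal.ofReal (2 * Real.exp (-d ^ 2 / (2 * c))) := by
  have : IsFiniteMeasure μ := by simpa [integrable_const_iff] using hX.integrable_exp_mul 0
  have hsplit : {ω | d ≤ |X ω|} = {ω | d ≤ X ω} ∪ {ω | d ≤ (-X) ω} := by
    ext ω
    simp only [Set.mem_ofPred_eq, Set.mem_union, Pi.neg_apply, le_abs]
  rw [hsplit, ENNReal.le_ofReal_iff_toReal_le (measure_ne_top _ _) (by positivity), two_mul]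
  exact (measureReal_union_le _ _).trans
    (add_le_add (hX.measure_ge_le hd) (hX.neg.measure_ge_le hd))

theorem hasSubgaussianMGF_id_gaussianReal (v : ℝ≥0) :
    HasSubgaussianMGF id v (gaussianReal 0 v) where
  integrable_exp_mul := integrable_exp_mul_gaussianReal
  mgf_le t := by simp [mgf_gaussianReal Measure.map_id]

section HeatMultiplier

variable {Y E : Type*} [NormedAddCommGroup E] [NormedSpace ℝ E]

/-- The Fourier multiplier `e^{-|D_t|²/l}` in the first variable of `ℝ × Y`, encoded through its
heat-kernel formula so that `v` need not be tempered. For `l ≤ 0` it has the junk value `0`. -/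
noncomputable def heatMultiplier (l : ℝ) (v : ℝ × Y → E) (p : ℝ × Y) : E :=
  √(l / (4 * Real.pi)) • ∫ s, Real.exp (-(l * (p.1 - s) ^ 2) / 4) • v (s, p.2)

theorem gaussianPDFReal_two_div {l : ℝ} (hl : 0 < l) (t s : ℝ) :
    gaussianPDFReal t (2 / l).toNNReal s =
      √(l / (4 * Real.pi)) * Real.exp (-(l * (t - s) ^ 2) / 4) := by
  rw [gaussianPDFReal, Real.coe_toNNReal _ (by positivity), ← Real.sqrt_inv]
  congr 2 <;> field_simp <;> ring

theorem heatMultiplier_eq_integral_gaussianReal {l : ℝ} (hl : 0 < l) (v : ℝ × Y → E) (p : ℝ × Y) :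
    heatMultiplier l v p = ∫ r, v (p.1 + r, p.2) ∂gaussianReal 0 (2 / l).toNNReal := by
  have hvar : (2 / l).toNNReal ≠ 0 := (Real.toNNReal_pos.2 (by positivity)).ne'
  calc heatMultiplier l v p
      = ∫ s, v (s, p.2) ∂gaussianReal p.1 (2 / l).toNNReal := by
        simp only [heatMultiplier, integral_gaussianReal_eq_integral_smul hvar,
          gaussianPDFReal_two_div hl, mul_smul, integral_smul]
    _ = ∫ r, v (p.1 + r, p.2) ∂gaussianReal 0 (2 / l).toNNReal := by
        rw [← zero_add p.1, ← gaussianReal_map_const_add, zero_add,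
          (measurableEmbedding_addLeft p.1).integral_map]

variable {𝕜 : Type*} [NormedField 𝕜] [NormedSpace 𝕜 E]

theorem enorm_smul_heatMultiplier_le {l : ℝ} (hl : 0 < l) {χ : ℝ × Y → 𝕜} {M : ℝ}
    (hχ : ∀ p, ‖χ p‖ ≤ M) {v : ℝ × Y → E} {d : ℝ}
    (hsupp : ∀ t s y, χ (t, y) ≠ 0 → v (s, y) ≠ 0 → d ≤ |t - s|) (p : ℝ × Y) :
    ‖χ p • heatMultiplier l v p‖ₑ ≤ ENNReal.ofReal M *
      ∫⁻ r in {r | d ≤ |r|}, ‖v (p.1 + r, p.2)‖ₑ ∂gaussianReal 0 (2 / l).toNNReal := by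
  rcases eq_or_ne (χ p) 0 with hp | hp
  · simp [hp]
  have hvanish : ∀ r ∉ {r | d ≤ |r|}, v (p.1 + r, p.2) = 0 := fun r hr => by
    by_contra hv
    exact hr (by simpa using hsupp p.1 (p.1 + r) p.2 hp hv)
  rw [enorm_smul, heatMultiplier_eq_integral_gaussianReal hl,
    ← setIntegral_eq_integral_of_forall_compl_eq_zero hvanish]
  gcongr
  · rw [← ofReal_norm]
    exact ENNReal.ofReal_le_ofReal (hχ p)
  · exact enorm_integral_le_lintegral_enorm _

variable [MeasurableSpace Y] {ν : Measure Y} [SFinite ν]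

theorem eLpNorm_smul_heatMultiplier_le {q : ℝ≥0∞} (hq : 1 ≤ q) {l : ℝ} (hl : 0 < l)
    {χ : ℝ × Y → 𝕜} {M : ℝ} (hχ : ∀ p, ‖χ p‖ ≤ M) {v : ℝ × Y → E}
    (hv : AEStronglyMeasurable v (volume.prod ν)) {d : ℝ} (hd : 0 ≤ d)
    (hsupp : ∀ t s y, χ (t, y) ≠ 0 → v (s, y) ≠ 0 → d ≤ |t - s|) :
    eLpNorm (fun p => χ p • heatMultiplier l v p) q (volume.prod ν) ≤
      ENNReal.ofReal M * (ENNReal.ofReal (2 * Real.exp (-(d ^ 2 / 4) * l)) *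
        eLpNorm v q (volume.prod ν)) := by
  set γ := gaussianReal 0 (2 / l).toNNReal
  have htail : γ {r | d ≤ |r|} ≤ ENNReal.ofReal (2 * Real.exp (-(d ^ 2 / 4) * l)) := by
    have hexponent : -d ^ 2 / (2 * ((2 / l).toNNReal : ℝ)) = -(d ^ 2 / 4) * l := by
      rw [Real.coe_toNNReal _ (by positivity)]
      field_simp
      norm_num
    rw [← hexponent]
    exact measure_le_abs_le_of_hasSubgaussianMGF (hasSubgaussianMGF_id_gaussianReal _) hd
  have htranslate (r : ℝ) : MeasurePreserving (fun p : ℝ × Y => (p.1 + r, p.2))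
      (volume.prod ν) (volume.prod ν) :=
    (measurePreserving_add_right volume r).prod (.id ν)
  have havg := eLpNorm_lintegral_comp_le (μ := γ.restrict {r | d ≤ |r|}) hq
    (by unfold Function.uncurry; fun_prop) htranslate hv.enorm
  rw [Measure.restrict_apply_univ, eLpNorm_enorm] at havg
  calc eLpNorm (fun p => χ p • heatMultiplier l v p) q (volume.prod ν)
      ≤ ENNReal.ofReal M * eLpNorm (fun p => ∫⁻ r in {r | d ≤ |r|}, ‖v (p.1 + r, p.2)‖ₑ ∂γ) q
          (volume.prod ν) :=
        eLpNorm_le_mul_eLpNorm_of_ae_le_mul'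
          (ae_of_all _ (enorm_smul_heatMultiplier_le hl hχ hsupp)) q
    _ ≤ ENNReal.ofReal M * (γ {r | d ≤ |r|} * eLpNorm v q (volume.prod ν)) := by gcongr
    _ ≤ _ := by gcongr

theorem stmt_12_general [CompleteSpace E] {q : ℝ≥0∞} (hq : 1 ≤ q) {χ₁ χ₂ : ℝ × Y → 𝕜}
    (hb₁ : ∃ M : ℝ, ∀ p, ‖χ₁ p‖ ≤ M) (hb₂ : ∃ M : ℝ, ∀ p, ‖χ₂ p‖ ≤ M)
    (hχ₂ : AEStronglyMeasurable χ₂ (volume.prod ν)) {d : ℝ} (hd : 0 < d)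
    (hsupp : ∀ t s y, χ₁ (t, y) ≠ 0 → χ₂ (s, y) ≠ 0 → d ≤ |t - s|) :
    ∃ C > (0 : ℝ), ∃ c > (0 : ℝ), ∀ u : ℝ × Y → E, AEStronglyMeasurable u (volume.prod ν) →
      ∀ l : ℝ, 0 < l →
        eLpNorm (fun p => χ₁ p • heatMultiplier l (fun z => χ₂ z • u z) p) q (volume.prod ν) ≤
          ENNReal.ofReal (C * Real.exp (-c * l)) * eLpNorm u q (volume.prod ν) := by
  obtain ⟨M₁, hM₁⟩ := hb₁
  obtain ⟨M₂, hM₂⟩ := hb₂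
  refine ⟨2 * (|M₁| * |M₂|) + 1, by positivity, d ^ 2 / 4, by positivity, fun u hu l hl => ?_⟩
  have hsupp_smul : ∀ t s y, χ₁ (t, y) ≠ 0 → χ₂ (s, y) • u (s, y) ≠ 0 → d ≤ |t - s| :=
    fun t s y h₁ h₂u => hsupp t s y h₁ (left_ne_zero_of_smul h₂u)
  have hχ₂u : eLpNorm (fun z => χ₂ z • u z) q (volume.prod ν) ≤
      ENNReal.ofReal |M₂| * eLpNorm u q (volume.prod ν) :=
    eLpNorm_le_mul_eLpNorm_of_ae_le_mul (ae_of_all _ fun z => by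
      rw [norm_smul]
      gcongr
      exact (hM₂ z).trans (le_abs_self M₂)) q
  calc eLpNorm (fun p => χ₁ p • heatMultiplier l (fun z => χ₂ z • u z) p) q (volume.prod ν)
      ≤ ENNReal.ofReal |M₁| * (ENNReal.ofReal (2 * Real.exp (-(d ^ 2 / 4) * l)) *
          (ENNReal.ofReal |M₂| * eLpNorm u q (volume.prod ν))) := by
        grw [← hχ₂u]
        exact eLpNorm_smul_heatMultiplier_le hq hl (fun p => (hM₁ p).trans (le_abs_self M₁))
          (hχ₂.smul hu) hd.le hsupp_smul
    _ = ENNReal.ofReal (2 * (|M₁| * |M₂|) * Real.exp (-(d ^ 2 / 4) * l)) *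
          eLpNorm u q (volume.prod ν) := by
        rw [← mul_assoc, ← mul_assoc, ← ENNReal.ofReal_mul (by positivity),
          ← ENNReal.ofReal_mul (by positivity)]
        congr 2
        ring
    _ ≤ _ := by
        gcongr
        linarith

end HeatMultiplier

/-- Off-diagonal Gaussian bound: if the supports of `χ₁` and `χ₂` are at `t`-distance
at least `d > 0`, then `‖χ₁ e^{-|D_t|²/λ}(χ₂ u)‖_{L²} ≤ C e^{-cλ} ‖u‖_{L²}`, where
`e^{-|D_t|²/λ}` is realized by its heat-kernel formula
`(e^{-|D_t|²/λ}v)(t,x) = √(λ/4π) ∫ e^{-λ(t-s)²/4} v(s,x) ds`. -/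
theorem stmt_12 {m : ℕ} (χ₁ χ₂ : (ℝ × (Fin m → ℝ)) → ℂ)
    (h₁ : ContDiff ℝ (⊤ : ℕ∞) χ₁) (h₂ : ContDiff ℝ (⊤ : ℕ∞) χ₂)
    (hb₁ : ∀ k : ℕ, ∃ M : ℝ, ∀ p, ‖iteratedFDeriv ℝ k χ₁ p‖ ≤ M)
    (hb₂ : ∀ k : ℕ, ∃ M : ℝ, ∀ p, ‖iteratedFDeriv ℝ k χ₂ p‖ ≤ M)
    (d : ℝ) (hd : 0 < d)
    (hsupp : ∀ p q : ℝ × (Fin m → ℝ), χ₁ p ≠ 0 → χ₂ q ≠ 0 → d ≤ |p.1 - q.1|) :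
    ∃ C > (0 : ℝ), ∃ c > (0 : ℝ), ∀ u : SchwartzMap (ℝ × (Fin m → ℝ)) ℂ, ∀ l : ℝ, 0 < l →
      eLpNorm (fun p : ℝ × (Fin m → ℝ) =>
          χ₁ p * (((Real.sqrt (l / (4 * Real.pi)) : ℝ) : ℂ) *
            ∫ s : ℝ, Complex.exp (((-(l * (p.1 - s) ^ 2) / 4 : ℝ)) : ℂ) *
              (χ₂ (s, p.2) * u (s, p.2)))) 2 volume
        ≤ ENNReal.ofReal (C * Real.exp (-c * l)) * eLpNorm (fun p => u p) 2 volume := by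
  obtain ⟨C, hC, c, hc, h⟩ := stmt_12_general (E := ℂ) (ν := volume) one_le_two
    (by simpa using hb₁ 0) (by simpa using hb₂ 0) h₂.continuous.aestronglyMeasurable hd
    fun t s y => hsupp (t, y) (s, y)
  exact ⟨C, hC, c, hc, fun u l hl => by
    simpa [heatMultiplier, Measure.volume_eq_prod] using h u u.continuous.aestronglyMeasurable l hl⟩
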